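/- A list τ of hexatags of length 2n − 1 (n ≥ 1) equals hexatags(T) for some binary head tree T with n leaves if and only if τ is valid, i.e., (i) every tag of τ at an odd position is terminal and every tag at an even position is nonterminal; (ii) the first tag of τ is tL; (iii) for every position k at which τₖ ∈ {⇒L, ⇒R}, the running stack count s₍ₖ₋₁₎ is at least 2; and (iv) the final stack count s₍₂ₙ₋₁₎ equals 1. -/

import Mathlib

/-- Binary head trees (BHTs). -/
inductive BHT : Type where
  | leaf : BHT
  | nodeL (l r : BHT) : BHT
  | nodeR (l r : BHT) : BHT

/-- Number of leaves of a BHT. -/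
def BHT.numLeaves : BHT → ℕ
  | .leaf => 1
  | .nodeL l r => l.numLeaves + r.numLeaves
  | .nodeR l r => l.numLeaves + r.numLeaves

/-- Head position of a BHT whose span of leaf positions starts at `i`. -/
def BHT.headAt : BHT → ℕ → ℕ
  | .leaf, i => i
  | .nodeL l _, i => l.headAt i
  | .nodeR l r, i => r.headAt (i + l.numLeaves)

/-- Head position of a BHT placed over positions `0, …, numLeaves - 1`. -/
def BHT.head (T : BHT) : ℕ := T.headAt 0

/-- Arc set of a BHT whose span of leaf positions starts at `i`. -/
def BHT.arcsAt : BHT → ℕ → Set (ℕ × ℕ)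
  | .leaf, _ => ∅
  | .nodeL l r, i =>
      insert (l.headAt i, r.headAt (i + l.numLeaves)) (l.arcsAt i ∪ r.arcsAt (i + l.numLeaves))
  | .nodeR l r, i =>
      insert (r.headAt (i + l.numLeaves), l.headAt i) (l.arcsAt i ∪ r.arcsAt (i + l.numLeaves))

/-- Arc set of a BHT placed over positions `0, …, numLeaves - 1`. -/
def BHT.arcs (T : BHT) : Set (ℕ × ℕ) := T.arcsAt 0

/-- `S` is a subtree of `T` (placed over positions `0, …, numLeaves - 1`) whose
leaf span starts at absolute position `i`. -/
inductive BHT.SubtreeAt : BHT → ℕ → BHT → Prop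
  | refl (T : BHT) : BHT.SubtreeAt T 0 T
  | inlL (l r S : BHT) (i : ℕ) : BHT.SubtreeAt l i S → BHT.SubtreeAt (BHT.nodeL l r) i S
  | inrL (l r S : BHT) (i : ℕ) :
      BHT.SubtreeAt r i S → BHT.SubtreeAt (BHT.nodeL l r) (l.numLeaves + i) S
  | inlR (l r S : BHT) (i : ℕ) : BHT.SubtreeAt l i S → BHT.SubtreeAt (BHT.nodeR l r) i S
  | inrR (l r S : BHT) (i : ℕ) :
      BHT.SubtreeAt r i S → BHT.SubtreeAt (BHT.nodeR l r) (l.numLeaves + i) S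

/-- `bht2dep T j = some i` if `i` is the unique position with `(i, j) ∈ arcs T`,
and `none` if `j` has no incoming arc. -/
noncomputable def bht2dep (n : ℕ) (T : BHT) : Fin n → Option (Fin n) := fun j =>
  letI := Classical.dec (∃! i : Fin n, ((i : ℕ), (j : ℕ)) ∈ T.arcs)
  if h : ∃! i : Fin n, ((i : ℕ), (j : ℕ)) ∈ T.arcs then some h.choose else none

/-- `head` is a dependency tree on `n` words: exactly one root (position with
`head r = none`), and every position reaches the root by iterating `head`. -/
def IsDepTree {n : ℕ} (head : Fin n → Option (Fin n)) : Prop :=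
  ∃ r : Fin n, head r = none ∧ (∀ r' : Fin n, head r' = none → r' = r) ∧
    ∀ j : Fin n, Relation.ReflTransGen (fun a b => head a = some b) j r

/-- A dependency tree is projective if every position's set of descendants is an
interval of consecutive positions. -/
def Projective {n : ℕ} (head : Fin n → Option (Fin n)) : Prop :=
  ∀ i : Fin n, ∃ a b : Fin n,
    ∀ j : Fin n, Relation.ReflTransGen (fun x y => head x = some y) j i ↔ (a ≤ j ∧ j ≤ b)

/-- The six hexatags: `tL`/`tR` are terminal tags (leaf that is a left/right child);
`leftL`/`leftR` are `⇐L`/`⇐R` (internal left child with head-label L/R);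
`rightL`/`rightR` are `⇒L`/`⇒R` (internal right child with head-label L/R). -/
inductive Hexatag : Type where
  | tL | tR | leftL | leftR | rightL | rightR
deriving DecidableEq

/-- A hexatag is terminal if it is `tL` or `tR`. -/
def Hexatag.isTerminal : Hexatag → Prop
  | .tL => True
  | .tR => True
  | _ => False

/-- In-order linearization; the Boolean records whether the current subtree is a
right child of its parent (the root counts as a left child by convention). -/
def BHT.hexatagsAux : BHT → Bool → List Hexatag
  | .leaf, false => [.tL]
  | .leaf, true => [.tR]
  | .nodeL l r, b =>
      l.hexatagsAux false ++ (if b then Hexatag.rightL else Hexatag.leftL) :: r.hexatagsAux true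
  | .nodeR l r, b =>
      l.hexatagsAux false ++ (if b then Hexatag.rightR else Hexatag.leftR) :: r.hexatagsAux true

/-- The hexatag linearization of a BHT. -/
def BHT.hexatags (T : BHT) : List Hexatag := T.hexatagsAux false

/-- The tags emitted for the leaves of a BHT, in left-to-right order. -/
def BHT.leafTagsAux : BHT → Bool → List Hexatag
  | .leaf, false => [.tL]
  | .leaf, true => [.tR]
  | .nodeL l r, _ => l.leafTagsAux false ++ r.leafTagsAux true
  | .nodeR l r, _ => l.leafTagsAux false ++ r.leafTagsAux true

/-- The tags emitted for the leaves of a BHT in left-to-right order (root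
counts as a left child by convention). -/
def BHT.leafTags (T : BHT) : List Hexatag := T.leafTagsAux false

/-- Partial BHTs: binary head trees possibly containing a dummy placeholder. -/
inductive PBHT : Type where
  | dummy : PBHT
  | leaf : PBHT
  | nodeL (l r : PBHT) : PBHT
  | nodeR (l r : PBHT) : PBHT
deriving DecidableEq

/-- Does a partial BHT contain a dummy? -/
def PBHT.hasDummy : PBHT → Bool
  | .dummy => true
  | .leaf => false
  | .nodeL l r => l.hasDummy || r.hasDummy
  | .nodeR l r => l.hasDummy || r.hasDummy

/-- Substitute `u` for the dummy in a partial BHT. -/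
def PBHT.subst : PBHT → PBHT → PBHT
  | .dummy, u => u
  | .leaf, _ => .leaf
  | .nodeL l r, u => .nodeL (l.subst u) (r.subst u)
  | .nodeR l r, u => .nodeR (l.subst u) (r.subst u)

/-- One step of the left-corner decoder on a stack of partial BHTs. -/
def hexStep : List PBHT → Hexatag → Option (List PBHT)
  | st, .tL => some (.leaf :: st)
  | t :: st, .tR => if t.hasDummy then some (t.subst .leaf :: st) else none
  | t :: st, .leftL => some (.nodeL t .dummy :: st)
  | t :: st, .leftR => some (.nodeR t .dummy :: st)
  | t :: u :: st, .rightL =>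
      if u.hasDummy then some (u.subst (.nodeL t .dummy) :: st) else none
  | t :: u :: st, .rightR =>
      if u.hasDummy then some (u.subst (.nodeR t .dummy) :: st) else none
  | _, _ => none

/-- The left-corner decoder: run the stack operations; succeed iff every
operation is defined and the final stack is a single dummy-free tree. -/
def tags2bht (τ : List Hexatag) : Option PBHT :=
  match τ.foldlM hexStep ([] : List PBHT) with
  | some [t] => if t.hasDummy then none else some t
  | _ => none

/-- Embedding of BHTs into partial BHTs. -/
def BHT.toPBHT : BHT → PBHT
  | .leaf => .leaf
  | .nodeL l r => .nodeL l.toPBHT r.toPBHT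
  | .nodeR l r => .nodeR l.toPBHT r.toPBHT

/-- Stack-count increment of a hexatag. -/
def Hexatag.delta : Hexatag → ℤ
  | .tL => 1
  | .tR => 0
  | .leftL => 0
  | .leftR => 0
  | .rightL => -1
  | .rightR => -1

/-- Running stack count `sₖ` after the first `k` tags of `τ`. -/
def stackCount (τ : List Hexatag) (k : ℕ) : ℤ :=
  ((τ.take k).map Hexatag.delta).sum

/-- Validity of a hexatag list (0-indexed: Lean index `k` is 1-indexed position `k+1`). -/
def ValidTags (τ : List Hexatag) : Prop :=
  (τ.length % 2 = 1 ∧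
    ∀ k : ℕ, ∀ t : Hexatag, τ[k]? = some t →
      (k % 2 = 0 → t.isTerminal) ∧ (k % 2 = 1 → ¬ t.isTerminal)) ∧
  τ[0]? = some Hexatag.tL ∧
  (∀ k : ℕ, ∀ t : Hexatag, τ[k]? = some t →
    (t = Hexatag.rightL ∨ t = Hexatag.rightR) → 2 ≤ stackCount τ k) ∧
  stackCount τ τ.length = 1

theorem BHT.hex_length (T : BHT) : ∀ b, (T.hexatagsAux b).length + 1 = 2 * T.numLeaves := by
  induction T with
  | leaf => intro b; cases b <;> rfl
  | nodeL l r ihl ihr =>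
    intro b
    have h1 := ihl false
    have h2 := ihr true
    simp only [BHT.hexatagsAux, BHT.numLeaves, List.length_append, List.length_cons]
    omega
  | nodeR l r ihl ihr =>
    intro b
    have h1 := ihl false
    have h2 := ihr true
    simp only [BHT.hexatagsAux, BHT.numLeaves, List.length_append, List.length_cons]
    omega

theorem BHT.hex_sum (T : BHT) :
    ∀ b, ((T.hexatagsAux b).map Hexatag.delta).sum = if b then 0 else 1 := by
  induction T with
  | leaf => intro b; cases b <;> simp [BHT.hexatagsAux, Hexatag.delta]
  | nodeL l r ihl ihr =>
    intro b
    cases b <;> simp [BHT.hexatagsAux, ihl, ihr, Hexatag.delta]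
  | nodeR l r ihl ihr =>
    intro b
    cases b <;> simp [BHT.hexatagsAux, ihl, ihr, Hexatag.delta]

theorem BHT.hex_head (T : BHT) : (T.hexatagsAux false)[0]? = some Hexatag.tL := by
  induction T with
  | leaf => rfl
  | nodeL l r ihl ihr =>
    have h := l.hex_length false
    simp only [BHT.hexatagsAux]
    rw [List.getElem?_append_left, ihl]
    by_contra hc
    have : l.hexatagsAux false = [] := List.length_eq_zero_iff.mp (by omega)
    simp [this] at ihl
  | nodeR l r ihl ihr =>
    have h := l.hex_length false
    simp only [BHT.hexatagsAux]
    rw [List.getElem?_append_left, ihl]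
    by_contra hc
    have : l.hexatagsAux false = [] := List.length_eq_zero_iff.mp (by omega)
    simp [this] at ihl

/-- Position-wise property of linearizations. -/
def HexOK (w : List Hexatag) (c : ℤ) : Prop :=
  ∀ k : ℕ, ∀ t : Hexatag, w[k]? = some t →
    ((k % 2 = 0 → t.isTerminal) ∧ (k % 2 = 1 → ¬ t.isTerminal)) ∧
    ((t = Hexatag.rightL ∨ t = Hexatag.rightR) → 2 ≤ c + stackCount w k)

theorem HexOK.node {u v : List Hexatag} {x : Hexatag} {c d : ℤ} (hu : HexOK u c)
    (hul : u.length % 2 = 1) (hx : ¬ x.isTerminal)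
    (hd : d = c + (u.map Hexatag.delta).sum)
    (hx2 : (x = Hexatag.rightL ∨ x = Hexatag.rightR) → 2 ≤ d)
    (hv : HexOK v (d + x.delta)) : HexOK (u ++ x :: v) c := by
  intro k t hk
  rcases lt_trichotomy k u.length with h | h | h
  · rw [List.getElem?_append_left h] at hk
    have := hu k t hk
    have e : stackCount (u ++ x :: v) k = stackCount u k := by
      unfold stackCount
      rw [List.take_append_of_le_length h.le]
    rw [e]; exact this
  · subst h
    simp at hk
    subst hk
    have e : stackCount (u ++ x :: v) u.length = (u.map Hexatag.delta).sum := by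
      simp [stackCount]
    rw [e, ← hd]
    exact ⟨⟨fun h => by omega, fun _ => hx⟩, hx2⟩
  · obtain ⟨m, rfl⟩ : ∃ m, k = u.length + (m + 1) := ⟨k - u.length - 1, by omega⟩
    rw [List.getElem?_append_right (by omega)] at hk
    simp at hk
    have := hv m t hk
    have e : stackCount (u ++ x :: v) (u.length + (m + 1)) =
        (u.map Hexatag.delta).sum + (x.delta + stackCount v m) := by
      simp [stackCount, List.take_append]
      rw [List.take_of_length_le (by simp)]
    rw [e]
    refine ⟨⟨fun h => this.1.1 (by omega), fun h => this.1.2 (by omega)⟩, fun h => ?_⟩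
    have := this.2 h
    omega

theorem BHT.hexOK (T : BHT) : ∀ b, HexOK (T.hexatagsAux b) (if b then 1 else 0) := by
  have mono : ∀ w c d, HexOK w c → c ≤ d → HexOK w d := by
    intro w c d h hcd k t hk
    refine ⟨(h k t hk).1, fun ht => ?_⟩
    have := (h k t hk).2 ht
    omega
  induction T with
  | leaf =>
    intro b k t hk
    cases b <;> cases k <;> simp [BHT.hexatagsAux] at hk <;> subst hk <;>
      simp [Hexatag.isTerminal]
  | nodeL l r ihl ihr =>
    intro b
    have hl := l.hex_length false
    have hs := l.hex_sum false
    have h0 := mono _ _ (if b then 1 else 0) (ihl false) (by cases b <;> simp)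
    refine HexOK.node h0 (by omega) ?_ rfl ?_ (mono _ _ _ (ihr true) ?_) <;>
      cases b <;> simp [hs, Hexatag.isTerminal, Hexatag.delta]
  | nodeR l r ihl ihr =>
    intro b
    have hl := l.hex_length false
    have hs := l.hex_sum false
    have h0 := mono _ _ (if b then 1 else 0) (ihl false) (by cases b <;> simp)
    refine HexOK.node h0 (by omega) ?_ rfl ?_ (mono _ _ _ (ihr true) ?_) <;>
      cases b <;> simp [hs, Hexatag.isTerminal, Hexatag.delta]

/-- A word which becomes a left-child linearization when completed by any right-child one. -/
def IsPart (p : List Hexatag) : Prop :=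
  ∀ T : BHT, ∃ T' : BHT, p ++ T.hexatagsAux true = T'.hexatagsAux false

/-- Concatenations of `n` partial words. -/
inductive Parts : ℕ → List Hexatag → Prop
  | nil : Parts 0 []
  | snoc (n : ℕ) (w p : List Hexatag) : Parts n w → IsPart p → Parts (n + 1) (w ++ p)

theorem isPart_left (t : BHT) (x : Hexatag) (hx : x = .leftL ∨ x = .leftR) :
    IsPart (t.hexatagsAux false ++ [x]) := by
  intro r
  rcases hx with rfl | rfl
  · exact ⟨.nodeL t r, by simp [BHT.hexatagsAux]⟩
  · exact ⟨.nodeR t r, by simp [BHT.hexatagsAux]⟩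

theorem isPart_right (p : List Hexatag) (hp : IsPart p) (t : BHT) (x : Hexatag)
    (hx : x = .rightL ∨ x = .rightR) :
    IsPart (p ++ (t.hexatagsAux false ++ [x])) := by
  intro r
  rcases hx with rfl | rfl
  · obtain ⟨T', h⟩ := hp (.nodeL t r)
    exact ⟨T', by rw [← h]; simp [BHT.hexatagsAux]⟩
  · obtain ⟨T', h⟩ := hp (.nodeR t r)
    exact ⟨T', by rw [← h]; simp [BHT.hexatagsAux]⟩

theorem stackCount_succ' (τ : List Hexatag) (k : ℕ) (t : Hexatag) (h : τ[k]? = some t) :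
    stackCount τ (k + 1) = stackCount τ k + t.delta := by
  simp [stackCount, List.take_add_one, h]

theorem take_succ' (τ : List Hexatag) (k : ℕ) (t : Hexatag) (h : τ[k]? = some t) :
    τ.take (k + 1) = τ.take k ++ [t] := by
  simp [List.take_add_one, h]

theorem valid_prefix (τ : List Hexatag) (hv : ValidTags τ) (k : ℕ) :
    2 * k + 1 ≤ τ.length → ∃ n : ℕ, stackCount τ (2 * k + 1) = n + 1 ∧
      ∃ w t, Parts n w ∧ τ.take (2 * k + 1) = w ++ BHT.hexatagsAux t false := by
  obtain ⟨⟨_, halt⟩, h0, hr, _⟩ := hv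
  induction k with
  | zero =>
    intro _
    refine ⟨0, ?_, [], .leaf, .nil, ?_⟩
    · rw [stackCount_succ' τ _ _ h0]; simp [stackCount, Hexatag.delta]
    · rw [take_succ' τ _ _ h0]; simp [BHT.hexatagsAux]
  | succ k ih =>
    intro hle
    obtain ⟨n, hs, w, t, hw, hτ⟩ := ih (by omega)
    obtain ⟨x, hx⟩ : ∃ x, τ[2 * k + 1]? = some x :=
      ⟨_, List.getElem?_eq_getElem (by omega)⟩
    obtain ⟨y, hy⟩ : ∃ y, τ[2 * k + 1 + 1]? = some y :=
      ⟨_, List.getElem?_eq_getElem (by omega)⟩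
    have hxt := (halt _ _ hx).2 (by omega)
    have hyt := (halt _ _ hy).1 (by omega)
    have hxr := hr _ _ hx
    have hs1 := stackCount_succ' τ _ _ hx
    have hs2 := stackCount_succ' τ _ _ hy
    have ht1 := take_succ' τ _ _ hx
    have ht2 := take_succ' τ _ _ hy
    rw [show 2 * (k + 1) + 1 = 2 * k + 1 + 1 + 1 by ring]
    -- state after the nonterminal
    have key : ∃ m : ℕ, stackCount τ (2 * k + 1 + 1) = m + 1 ∧
        ∃ w p, Parts m w ∧ IsPart p ∧ τ.take (2 * k + 1 + 1) = w ++ p := by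
      have hcase : (x = .leftL ∨ x = .leftR) ∨ (x = .rightL ∨ x = .rightR) := by
        cases x <;> simp_all [Hexatag.isTerminal]
      rcases hcase with h | h
      · refine ⟨n, ?_, w, _, hw, isPart_left t x h, ?_⟩
        · rcases h with rfl | rfl <;> simp [hs1, hs, Hexatag.delta]
        · rw [ht1, hτ, List.append_assoc]
      · have h2 := hxr h
        cases hw with
        | nil => rw [hs] at h2; norm_num at h2
        | snoc n w p hw hp =>
          refine ⟨n, ?_, w, _, hw, isPart_right p hp t x h, ?_⟩
          · rcases h with rfl | rfl <;> simp [hs1, hs, Hexatag.delta]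
          · rw [ht1, hτ, List.append_assoc, List.append_assoc]
    obtain ⟨m, hm, w, p, hw, hp, hwp⟩ := key
    cases y with
    | tL =>
      refine ⟨m + 1, ?_, w ++ p, .leaf, .snoc _ _ _ hw hp, ?_⟩
      · rw [hs2, hm]; simp [Hexatag.delta]
      · rw [ht2, hwp]; rfl
    | tR =>
      obtain ⟨T', hT'⟩ := hp .leaf
      refine ⟨m, ?_, w, T', hw, ?_⟩
      · rw [hs2, hm]; simp [Hexatag.delta]
      · rw [ht2, hwp, ← hT', List.append_assoc]; rfl
    | leftL => exact hyt.elim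
    | leftR => exact hyt.elim
    | rightL => exact hyt.elim
    | rightR => exact hyt.elim

theorem hexatags_range_iff_valid (n : ℕ) (hn : 1 ≤ n) (τ : List Hexatag)
    (hlen : τ.length = 2 * n - 1) :
    (∃ T : BHT, T.numLeaves = n ∧ τ = T.hexatags) ↔ ValidTags τ := by
  constructor
  · rintro ⟨T, hT, rfl⟩
    have hok := T.hexOK false
    refine ⟨⟨by omega, fun k t hk => (hok k t hk).1⟩, T.hex_head, fun k t hk ht => ?_, ?_⟩
    · have := (hok k t hk).2 ht
      simpa [BHT.hexatags] using this
    · have := T.hex_sum false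
      simpa [stackCount, BHT.hexatags] using this
  · intro hv
    obtain ⟨m, hs, w, t, hw, hτ⟩ := valid_prefix τ hv (n - 1) (by omega)
    have e : 2 * (n - 1) + 1 = τ.length := by omega
    rw [e] at hs hτ
    have h1 := hv.2.2.2
    have hm : m = 0 := by omega
    subst hm
    cases hw
    rw [List.take_length, List.nil_append] at hτ
    refine ⟨t, ?_, hτ⟩
    have := t.hex_length false
    rw [← hτ] at this
    omega
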